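/- Let R be the quotient of ℂ⟨e1,e2,e3⟩ by the two-sided ideal generated by e1e2 − e2e1 − e2, e1e3 − e3e1, and e2e3 + e3e2. Then h_0 = 1, h_1 = 2, h_2 = 1, and h_n = 0 for all n ≥ 3. -/

import Mathlib

open CategoryTheory FreeAlgebra

/-- `Ext^m_R(ℂ,ℂ)` as a ℂ-module, where `ℂ` is an `R`-module via the augmentation `ε`. -/
noncomputable def extC (R : Type) [Ring R] [Algebra ℂ R] (ε : R →ₐ[ℂ] ℂ) (m : ℕ) :
    ModuleCat ℂ :=
  letI : Module R ℂ := Module.compHom ℂ ε.toRingHom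
  ((Ext ℂ (ModuleCat R) m).obj (Opposite.op (ModuleCat.of R ℂ))).obj (ModuleCat.of R ℂ)

/-- `h_m = dim_ℂ Ext^m_R(ℂ,ℂ)`. -/
noncomputable def extDim (R : Type) [Ring R] [Algebra ℂ R] (ε : R →ₐ[ℂ] ℂ) (m : ℕ) : ℕ :=
  Module.finrank ℂ (extC R ε m)

/-- Relations: `e1e2 - e2e1 = e2`, `e1e3 - e3e1 = 0`, `e2e3 + e3e2 = 0`. -/
inductive CRel : FreeAlgebra ℂ (Fin 3) → FreeAlgebra ℂ (Fin 3) → Prop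
  | r12 : CRel (ι ℂ 0 * ι ℂ 1 - ι ℂ 1 * ι ℂ 0) (ι ℂ 1)
  | r13 : CRel (ι ℂ 0 * ι ℂ 2 - ι ℂ 2 * ι ℂ 0) 0
  | r23 : CRel (ι ℂ 1 * ι ℂ 2 + ι ℂ 2 * ι ℂ 1) 0

section alg
open MvPolynomial

namespace Betti

/-- Algebras with the presentation of the theorem, described by their universal property. -/
class Good (R : Type) [Ring R] [Algebra ℂ R] where
  gen : Fin 3 → R
  rel_tx : gen 0 * gen 1 = gen 1 * gen 0 + gen 1
  rel_ty : gen 0 * gen 2 = gen 2 * gen 0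
  rel_xy : gen 1 * gen 2 = - (gen 2 * gen 1)
  ind : ∀ {P : R → Prop} (_ : ∀ c : ℂ, P (algebraMap ℂ R c)) (_ : ∀ i, P (gen i))
    (_ : ∀ a b, P a → P b → P (a + b)) (_ : ∀ a b, P a → P b → P (a * b)) (r : R), P r
  exists_lift : ∀ {B : Type} [Ring B] [Algebra ℂ B] (f : Fin 3 → B)
    (_ : f 0 * f 1 = f 1 * f 0 + f 1) (_ : f 0 * f 2 = f 2 * f 0)
    (_ : f 1 * f 2 = - (f 2 * f 1)), ∃ φ : R →ₐ[ℂ] B, ∀ i, φ (gen i) = f i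

variable {R : Type} [Ring R] [Algebra ℂ R] [Good R]

abbrev gt : R := Good.gen 0
abbrev gx : R := Good.gen 1
abbrev gy : R := Good.gen 2

lemma rel_tx : (gt * gx : R) = gx * gt + gx := Good.rel_tx
lemma rel_ty : (gt * gy : R) = gy * gt := Good.rel_ty
lemma rel_xy : (gx * gy : R) = - (gy * gx) := Good.rel_xy

/-- Induction principle on `R`. -/
lemma R_induction {P : R → Prop} (hs : ∀ c : ℂ, P (algebraMap ℂ R c)) (hg : ∀ i, P (Good.gen i))
    (ha : ∀ a b, P a → P b → P (a + b)) (hm : ∀ a b, P a → P b → P (a * b)) (r : R) : P r :=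
  Good.ind hs hg ha hm r

abbrev V := MvPolynomial (Fin 3) ℂ

noncomputable def sig : V →ₐ[ℂ] V := aeval ![X 0 - 1, X 1, - X 2]

variable (R) in
lemma exists_rho : ∃ ρ : R →ₐ[ℂ] Module.End ℂ V, (∀ f, ρ (gt : R) f = X 0 * f) ∧
    (∀ f, ρ (gx : R) f = X 1 * sig f) ∧ (∀ f, ρ (gy : R) f = X 2 * f) := by
  obtain ⟨φ, h⟩ := Good.exists_lift (R := R) (B := Module.End ℂ V)
    ![LinearMap.mulLeft ℂ (X 0), LinearMap.mulLeft ℂ (X 1) ∘ₗ sig.toLinearMap,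
      LinearMap.mulLeft ℂ (X 2)] 
      (by apply LinearMap.ext; intro f; simp [sig]; ring) 
      (by apply LinearMap.ext; intro f; simp; ring)
      (by apply LinearMap.ext; intro f; simp [sig]; ring)
  refine ⟨φ, fun f => ?_, fun f => ?_, fun f => ?_⟩ <;> simp [h]

noncomputable def rho : R →ₐ[ℂ] Module.End ℂ V := (exists_rho R).choose
lemma rho_t (f : V) : rho (gt : R) f = X 0 * f := (exists_rho R).choose_spec.1 f
lemma rho_x (f : V) : rho (gx : R) f = X 1 * sig f := (exists_rho R).choose_spec.2.1 f
lemma rho_y (f : V) : rho (gy : R) f = X 2 * f := (exists_rho R).choose_spec.2.2 f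

lemma rho_X (r : R) (f : V) : rho r (X 1 * f) = X 1 * rho r f := by
  revert f
  induction r using R_induction with
  | hs c => intro f; simp [Algebra.algebraMap_eq_smul_one]
  | hg i =>
    intro f
    fin_cases i
    · change rho (gt : R) _ = _ * rho (gt : R) _
      simp only [rho_t]; ring
    · change rho (gx : R) _ = _ * rho (gx : R) _
      simp only [rho_x, map_mul]; simp [sig]
    · change rho (gy : R) _ = _ * rho (gy : R) _
      simp only [rho_y]; ring
  | ha a b h1 h2 => intro f; simp [h1, h2, mul_add]
  | hm a b h1 h2 => intro f; simp [h1, h2]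

/-- the section -/
noncomputable def sec : V →ₗ[ℂ] R :=
  (basisMonomials (Fin 3) ℂ).constr ℂ fun m => (gy : R) ^ m 2 * gt ^ m 0 * gx ^ m 1

lemma sec_mon (m : Fin 3 →₀ ℕ) : sec (monomial m 1) = (gy : R) ^ m 2 * gt ^ m 0 * gx ^ m 1 := by
  have := (basisMonomials (Fin 3) ℂ).constr_basis ℂ (fun m => (gy : R) ^ m 2 * gt ^ m 0 * gx ^ m 1) m
  rw [coe_basisMonomials] at this
  exact this

lemma ty_pow (n : ℕ) : (gt : R) * gy ^ n = gy ^ n * gt :=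
  (show Commute (gt : R) gy from rel_ty).pow_right n

lemma lin_ext {S : Type} [Ring S] [Algebra ℂ S] {f g : V →ₗ[ℂ] S} (h : ∀ m, f (monomial m 1) = g (monomial m 1)) (v : V) :
    f v = g v := by
  have : f = g := (basisMonomials (Fin 3) ℂ).ext (by simpa using h)
  rw [this]

lemma sec_t (f : V) : sec (X 0 * f) = (gt : R) * sec f := by
  refine lin_ext (f := (sec : V →ₗ[ℂ] R) ∘ₗ LinearMap.mulLeft ℂ (X 0)) (g := LinearMap.mulLeft ℂ gt ∘ₗ sec) ?_ f
  intro m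
  simp only [LinearMap.comp_apply, LinearMap.mulLeft_apply, X, monomial_mul, one_mul, sec_mon]
  simp [← mul_assoc, ty_pow, pow_add]

lemma sec_y (f : V) : sec (X 2 * f) = (gy : R) * sec f := by
  refine lin_ext (f := (sec : V →ₗ[ℂ] R) ∘ₗ LinearMap.mulLeft ℂ (X 2)) (g := LinearMap.mulLeft ℂ gy ∘ₗ sec) ?_ f
  intro m
  simp only [LinearMap.comp_apply, LinearMap.mulLeft_apply, X, monomial_mul, one_mul, sec_mon]
  simp [← mul_assoc, pow_add]

lemma sec_X (f : V) : sec (X 1 * f) = sec f * (gx : R) := by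
  refine lin_ext (f := (sec : V →ₗ[ℂ] R) ∘ₗ LinearMap.mulLeft ℂ (X 1)) (g := LinearMap.mulRight ℂ gx ∘ₗ sec) ?_ f
  intro m
  simp only [LinearMap.comp_apply, LinearMap.mulLeft_apply, LinearMap.mulRight_apply, X,
    monomial_mul, one_mul, sec_mon]
  simp [mul_assoc, pow_add, (Commute.pow_self _ _).eq]

lemma sec_one : sec 1 = (1 : R) := by
  have := sec_mon (R := R) 0
  simpa using this

lemma sec_sig (f : V) : sec (X 1 * sig f) = (gx : R) * sec f := by
  induction f using MvPolynomial.induction_on with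
  | C a =>
    have : (C a : V) = a • 1 := by rw [MvPolynomial.smul_eq_C_mul, mul_one]
    rw [this]
    rw [map_smul, map_one, mul_smul_comm, map_smul, sec_X, map_smul, sec_one, one_mul,
      mul_smul_comm, mul_one]
  | add p q h1 h2 => simp [mul_add, h1, h2]
  | mul_X p i h =>
    fin_cases i
    · have e : X 1 * sig (p * X 0) = X 0 * (X 1 * sig p) - X 1 * sig p := by
        simp [sig]; ring
      change sec (X 1 * sig (p * X 0)) = (gx : R) * sec (p * X 0)
      rw [e, map_sub, sec_t, h, mul_comm p, sec_t, ← mul_assoc, rel_tx]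
      noncomm_ring
    · have e : X 1 * sig (p * X 1) = X 1 * (X 1 * sig p) := by
        simp [sig]; ring
      change sec (X 1 * sig (p * X 1)) = (gx : R) * sec (p * X 1)
      rw [e, sec_X, h, mul_comm p, sec_X, mul_assoc]
    · have e : X 1 * sig (p * X 2) = - (X 2 * (X 1 * sig p)) := by
        simp [sig]; ring
      change sec (X 1 * sig (p * X 2)) = (gx : R) * sec (p * X 2)
      rw [e, map_neg, sec_y, h, mul_comm p, sec_y, ← mul_assoc gx, rel_xy, neg_mul, mul_assoc]

lemma sec_rho (r : R) (f : V) : sec (rho r f) = r * sec f := by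
  revert f
  induction r using R_induction with
  | hs c => intro f; simp [Algebra.algebraMap_eq_smul_one]
  | hg i =>
    intro f
    fin_cases i
    · change sec (rho (gt : R) _) = (gt : R) * _
      rw [rho_t, sec_t]
    · change sec (rho (gx : R) _) = (gx : R) * _
      rw [rho_x, sec_sig]
    · change sec (rho (gy : R) _) = (gy : R) * _
      rw [rho_y, sec_y]
  | ha a b h1 h2 => intro f; simp [h1, h2, add_mul]
  | hm a b h1 h2 => intro f; simp [h1, h2, mul_assoc]

lemma sec_rho_one (r : R) : sec (rho r 1) = r := by rw [sec_rho, sec_one, mul_one]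

/-- K1 -/
lemma x_regular {r : R} (h : r * gx = 0) : r = 0 := by
  have h1 : rho (r * gx) 1 = X 1 * rho r 1 := by
    rw [map_mul, Module.End.mul_apply, rho_x, map_one, rho_X]
  rw [h, map_zero, LinearMap.zero_apply] at h1
  have h2 : rho r 1 = 0 := by
    rcases mul_eq_zero.1 h1.symm with h | h
    · exact absurd h (X_ne_zero _)
    · exact h
  rw [← sec_rho_one r, h2, map_zero]

/-- K2 -/
lemma K2 {b c : R} (h : c * gy = b * gx) : ∃ r, c = r * gx := by
  obtain ⟨φ, hφ⟩ := Good.exists_lift (R := R) (B := V) ![X 0, 0, X 2] (by simp) (by simp; ring) (by simp)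
  let π : V →ₐ[ℂ] V := aeval ![X 0, 0, X 2]
  have key : ∀ r f, π (rho r f) = φ r * π f := by
    intro r
    induction r using R_induction with
    | hs c => intro f; simp [Algebra.algebraMap_eq_smul_one]
    | hg i =>
      intro f
      fin_cases i
      · change π (rho (gt : R) _) = φ gt * _
        rw [rho_t, hφ]; simp [π]
      · change π (rho (gx : R) _) = φ gx * _
        rw [rho_x, hφ]; simp [π]
      · change π (rho (gy : R) _) = φ gy * _
        rw [rho_y, hφ]; simp [π]
    | ha a b h1 h2 => intro f; simp [h1, h2, add_mul]
    | hm a b h1 h2 => intro f; simp [h1, h2, mul_assoc]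
  have hπ : ∀ f, ∃ g, f = π f + X 1 * g := by
    intro f
    induction f using MvPolynomial.induction_on with
    | C a => exact ⟨0, by simp [π]⟩
    | add p q h1 h2 =>
      obtain ⟨g, hg⟩ := h1
      obtain ⟨g', hg'⟩ := h2
      exact ⟨g + g', by rw [map_add]; linear_combination hg + hg'⟩
    | mul_X p i h =>
      obtain ⟨g, hg⟩ := h
      fin_cases i
      · exact ⟨g * X 0, by simp [π] at hg ⊢; linear_combination X 0 * hg⟩
      · exact ⟨p, by simp [π]; ring⟩
      · exact ⟨g * X 2, by simp [π] at hg ⊢; linear_combination X 2 * hg⟩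
  have h1 : φ c * X 2 = 0 := by
    have := congrArg φ h
    rw [map_mul, map_mul, hφ, hφ] at this
    simpa using this
  have h2 : φ c = 0 := (mul_eq_zero.1 h1).resolve_right (X_ne_zero _)
  obtain ⟨g, hg⟩ := hπ (rho c 1)
  rw [key, h2, zero_mul, zero_add] at hg
  exact ⟨sec g, by rw [← sec_X, ← hg, sec_rho_one]⟩

lemma y_normal (r : R) : ∃ r', gy * r = r' * gy := by
  induction r using R_induction with
  | hs c => exact ⟨algebraMap ℂ R c, (Algebra.commutes c gy).symm⟩
  | hg i =>
    fin_cases i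
    · exact ⟨gt, rel_ty.symm⟩
    · exact ⟨-gx, by change (gy : R) * gx = _; rw [neg_mul, rel_xy, neg_neg]⟩
    · exact ⟨gy, rfl⟩
  | ha a b h1 h2 =>
    obtain ⟨a', h1⟩ := h1
    obtain ⟨b', h2⟩ := h2
    exact ⟨a' + b', by rw [mul_add, add_mul, h1, h2]⟩
  | hm a b h1 h2 =>
    obtain ⟨a', h1⟩ := h1
    obtain ⟨b', h2⟩ := h2
    exact ⟨a' * b', by rw [← mul_assoc, h1, mul_assoc, h2, mul_assoc]⟩

/-- K3 -/
lemma K3 {a b c : R} (h : a * gx + b * gy + c * gt = 0) : ∃ u v, c = u * gx + v * gy := by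
  obtain ⟨φ, hφ⟩ := Good.exists_lift (R := R) (B := V) ![X 0, 0, 0] (by simp) (by simp) (by simp)
  let π : V →ₐ[ℂ] V := aeval ![X 0, 0, 0]
  have key : ∀ r f, π (rho r f) = φ r * π f := by
    intro r
    induction r using R_induction with
    | hs c => intro f; simp [Algebra.algebraMap_eq_smul_one]
    | hg i =>
      intro f
      fin_cases i
      · change π (rho (gt : R) _) = φ gt * _
        rw [rho_t, hφ]; simp [π]
      · change π (rho (gx : R) _) = φ gx * _
        rw [rho_x, hφ]; simp [π]
      · change π (rho (gy : R) _) = φ gy * _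
        rw [rho_y, hφ]; simp [π]
    | ha a b h1 h2 => intro f; simp [h1, h2, add_mul]
    | hm a b h1 h2 => intro f; simp [h1, h2, mul_assoc]
  have hπ : ∀ f, ∃ g k, f = π f + X 1 * g + X 2 * k := by
    intro f
    induction f using MvPolynomial.induction_on with
    | C a => exact ⟨0, 0, by simp [π]⟩
    | add p q h1 h2 =>
      obtain ⟨g, k, hg⟩ := h1
      obtain ⟨g', k', hg'⟩ := h2
      exact ⟨g + g', k + k', by rw [map_add]; linear_combination hg + hg'⟩
    | mul_X p i h =>
      obtain ⟨g, k, hg⟩ := h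
      fin_cases i
      · exact ⟨g * X 0, k * X 0, by simp [π] at hg ⊢; linear_combination X 0 * hg⟩
      · exact ⟨p, 0, by simp [π]; ring⟩
      · exact ⟨0, p, by simp [π]; ring⟩
  have h1 : φ c * X 0 = 0 := by
    have := congrArg φ h
    rw [map_add, map_add, map_mul, map_mul, map_mul, hφ, hφ, hφ] at this
    simpa using this
  have h2 : φ c = 0 := (mul_eq_zero.1 h1).resolve_right (X_ne_zero _)
  obtain ⟨g, k, hg⟩ := hπ (rho c 1)
  rw [key, h2, zero_mul, zero_add] at hg
  obtain ⟨v, hv⟩ := y_normal (sec k : R)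
  exact ⟨sec g, v, by rw [← sec_X, ← hv, ← sec_y, ← map_add, ← hg, sec_rho_one]⟩

/-- K4 -/
lemma K4 (r : R) : ∃ (z : ℂ) (a b c : R), r = algebraMap ℂ R z + (a * gx + b * gy + c * gt) := by
  induction r using R_induction with
  | hs c => exact ⟨c, 0, 0, 0, by simp⟩
  | hg i =>
    fin_cases i
    · exact ⟨0, 0, 0, 1, by simp⟩
    · exact ⟨0, 1, 0, 0, by simp⟩
    · exact ⟨0, 0, 1, 0, by simp⟩
  | ha a b h1 h2 =>
    obtain ⟨z, a, b, c, rfl⟩ := h1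
    obtain ⟨z', a', b', c', rfl⟩ := h2
    exact ⟨z + z', a + a', b + b', c + c', by rw [map_add]; noncomm_ring⟩
  | hm p q h1 h2 =>
    obtain ⟨z, a, b, c, hp⟩ := h1
    obtain ⟨z', a', b', c', rfl⟩ := h2
    refine ⟨z * z', z' • a + p * a', z' • b + p * b', z' • c + p * c', ?_⟩
    rw [mul_add, ← Algebra.commutes, hp]
    simp only [Algebra.algebraMap_eq_smul_one, smul_mul_assoc, mul_smul_comm, one_mul,
      mul_add, add_mul, mul_assoc, smul_smul]
    abel

lemma exact2 {a b c : R} (h2 : a * gx + c * gt = 0)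
    (h3 : b * gx + c * gy = 0) : ∃ r, a = r * (1 - gt) ∧ b = r * gy ∧ c = r * gx := by
  obtain ⟨r, rfl⟩ := K2 (c := c) (b := -b) (by rw [neg_mul]; exact eq_neg_of_add_eq_zero_right h3)
  refine ⟨r, ?_, ?_, rfl⟩
  · rw [← sub_eq_zero]
    apply x_regular
    rw [← h2, mul_assoc r gx gt, ← sub_eq_zero]
    have : (gx * gt : R) = gt * gx - gx := by rw [rel_tx]; abel
    rw [this]
    noncomm_ring
  · rw [← sub_eq_zero]
    apply x_regular
    rw [← h3, mul_assoc r gx gy, rel_xy]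
    noncomm_ring

lemma exact1 {a b c : R} (h : a * gx + b * gy + c * gt = 0) :
    ∃ s u v, a = s * gy + u * (gt - 1) ∧ b = s * gx + v * gt ∧ c = - (u * gx) - v * gy := by
  obtain ⟨u, v, rfl⟩ := K3 h
  have e1 : (a + u * (gt - 1)) * gx + (b + v * gt) * gy = 0 := by
    rw [← h]
    have : (gx * gt : R) = gt * gx - gx := by rw [rel_tx]; abel
    simp only [add_mul, mul_assoc, this, rel_ty, sub_mul, mul_sub, mul_one]
    abel
  obtain ⟨s, hs⟩ := K2 (c := b + v * gt) (b := -(a + u * (gt - 1)))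
    (by rw [neg_mul]; exact eq_neg_of_add_eq_zero_right e1)
  refine ⟨s, -u, -v, ?_, ?_, ?_⟩
  · rw [← sub_eq_zero]
    apply x_regular
    rw [← e1, hs, mul_assoc s gx gy, rel_xy]
    noncomm_ring
  · rw [← hs]; noncomm_ring
  · noncomm_ring

end Betti
end alg
section res
open Limits

namespace Betti

variable {R : Type} [Ring R] [Algebra ℂ R] [Good R]

/-- ranks of the resolution -/
def bt : ℕ → ℕ
  | 0 => 1
  | 1 => 3
  | 2 => 3
  | 3 => 1
  | _ => 0

variable (R) in
/-- matrices of the resolution -/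
def Mt : (n : ℕ) → Matrix (Fin (bt (n + 1))) (Fin (bt n)) R
  | 0 => (!![gx; gy; gt] : Matrix (Fin 3) (Fin 1) R)
  | 1 => (!![gy, gx, 0; gt - 1, 0, -gx; 0, gt, -gy] : Matrix (Fin 3) (Fin 3) R)
  | 2 => (!![1 - gt, gy, gx] : Matrix (Fin 1) (Fin 3) R)
  | _ + 3 => 0

lemma Mt_mul (n : ℕ) : Mt R (n + 1) * Mt R n = 0 := by
  have hx : (gx * gt : R) = gt * gx - gx := by rw [rel_tx]; abel
  match n with
  | 0 =>
    change (!![gy, gx, 0; gt - 1, 0, -gx; 0, gt, -gy] : Matrix (Fin 3) (Fin 3) R) *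
      (!![gx; gy; gt] : Matrix (Fin 3) (Fin 1) R) = 0
    ext i j
    fin_cases i <;> fin_cases j <;>
      simp [Matrix.mul_apply, Fin.sum_univ_succ, rel_xy, hx, rel_ty, sub_mul]
  | 1 =>
    change (!![1 - gt, gy, gx] : Matrix (Fin 1) (Fin 3) R) *
      (!![gy, gx, 0; gt - 1, 0, -gx; 0, gt, -gy] : Matrix (Fin 3) (Fin 3) R) = 0
    ext i j
    fin_cases i <;> fin_cases j <;>
      simp [Matrix.mul_apply, Fin.sum_univ_succ, rel_xy, hx, rel_ty, sub_mul, mul_sub]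
  | n + 2 => exact Matrix.zero_mul _

lemma Mt_exact (n : ℕ) (v : Fin (bt (n + 1)) → R) (h : Matrix.vecMul v (Mt R n) = 0) :
    ∃ w, Matrix.vecMul w (Mt R (n + 1)) = v := by
  match n, v, h with
  | 0, v, h =>
    change Fin 3 → R at v
    replace h : Matrix.vecMul v (!![gx; gy; gt] : Matrix (Fin 3) (Fin 1) R) = 0 := h
    have h0 := congrFun h 0
    simp [Matrix.vecMul, dotProduct, Fin.sum_univ_succ, ← add_assoc] at h0
    obtain ⟨s, u, w, h1, h2, h3⟩ := exact1 h0
    refine ⟨(![s, u, w] : Fin 3 → R), ?_⟩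
    change Matrix.vecMul ![s, u, w]
      (!![gy, gx, 0; gt - 1, 0, -gx; 0, gt, -gy] : Matrix (Fin 3) (Fin 3) R) = v
    ext i
    fin_cases i
    · simp [h1]
    · simp [h2]
    · simp [h3, sub_eq_add_neg]
  | 1, v, h =>
    change Fin 3 → R at v
    replace h : Matrix.vecMul v
      (!![gy, gx, 0; gt - 1, 0, -gx; 0, gt, -gy] : Matrix (Fin 3) (Fin 3) R) = 0 := h
    have h1 := congrFun h 1
    have h2 := congrFun h 2
    simp [Matrix.vecMul, dotProduct, Fin.sum_univ_succ] at h1 h2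
    obtain ⟨s, h1, h2, h3⟩ := exact2 (a := v 0) (b := v 1) (c := v 2) h1
      (by rw [← neg_eq_zero, ← h2]; abel)
    refine ⟨(![s] : Fin 1 → R), ?_⟩
    change Matrix.vecMul ![s] (!![1 - gt, gy, gx] : Matrix (Fin 1) (Fin 3) R) = v
    ext i
    fin_cases i
    · simp [h1]
    · simp [h2]
    · simp [h3]
  | 2, v, h =>
    change Fin 1 → R at v
    replace h : Matrix.vecMul v (!![1 - gt, gy, gx] : Matrix (Fin 1) (Fin 3) R) = 0 := h
    have h2 := congrFun h 2
    simp [Matrix.vecMul, dotProduct, Fin.sum_univ_succ] at h2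
    have h3 := x_regular h2
    refine ⟨0, ?_⟩
    rw [Matrix.zero_vecMul]
    symm
    change v = 0
    ext i
    fin_cases i
    exact h3
  | n + 3, v, h =>
    exact ⟨0, by ext i; exact Fin.elim0 i⟩

variable (R) in
def XX (n : ℕ) : ModuleCat.{0} R := ModuleCat.of R (Fin (bt n) → R)

variable (R) in
def dd (n : ℕ) : XX R (n + 1) ⟶ XX R n := ModuleCat.ofHom (Mt R n).vecMulLinear

lemma dd_apply (n : ℕ) (v : Fin (bt (n + 1)) → R) :
    (dd R n).hom v = Matrix.vecMul v (Mt R n) := rfl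

lemma dd_dd (n : ℕ) : dd R (n + 1) ≫ dd R n = 0 := by
  ext v
  change Fin (bt (n + 2)) → R at v
  change Matrix.vecMul (Matrix.vecMul v (Mt R (n + 1))) (Mt R n) = 0
  rw [Matrix.vecMul_vecMul, Mt_mul, Matrix.vecMul_zero]

variable (R) in
noncomputable def cpx : ChainComplex (ModuleCat.{0} R) ℕ := ChainComplex.of (XX R) (dd R) dd_dd

lemma cpx_d (n : ℕ) : (cpx R).d (n + 1) n = dd R n := ChainComplex.of_d _ _ _

instance (n : ℕ) : Projective (XX R n) := by
  unfold XX
  infer_instance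

/-- the trivial module -/
noncomputable def triv (ε : R →ₐ[ℂ] ℂ) : ModuleCat.{0} R :=
  letI : Module R ℂ := Module.compHom ℂ ε.toRingHom
  ModuleCat.of R ℂ

noncomputable def aug (ε : R →ₐ[ℂ] ℂ) : XX R 0 ⟶ triv ε :=
  letI : Module R ℂ := Module.compHom ℂ ε.toRingHom
  ModuleCat.ofHom
    { toFun := fun v : Fin 1 → R => ε (v 0)
      map_add' := fun v w => map_add ε _ _
      map_smul' := fun r v => map_mul ε _ _ }

lemma aug_apply (ε : R →ₐ[ℂ] ℂ) (v : Fin 1 → R) : (aug ε).hom v = ε (v 0) := rfl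

lemma dd_aug (ε : R →ₐ[ℂ] ℂ) (hε : ∀ i, ε (Good.gen i) = 0) : dd R 0 ≫ aug ε = 0 := by
  ext v
  change Fin 3 → R at v
  change ε ((Matrix.vecMul v (!![gx; gy; gt] : Matrix (Fin 3) (Fin 1) R)) 0) = 0
  simp [Matrix.vecMul, dotProduct, Fin.sum_univ_succ, hε]

lemma aug_exact (ε : R →ₐ[ℂ] ℂ) (hε : ∀ i, ε (Good.gen i) = 0) (v : Fin 1 → R) (h : ε (v 0) = 0) :
    ∃ w : Fin 3 → R, Matrix.vecMul w (!![gx; gy; gt] : Matrix (Fin 3) (Fin 1) R) = v := by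
  obtain ⟨z, a, b, c, hr⟩ := K4 (v 0)
  have hz : z = 0 := by
    rw [hr] at h
    simpa [hε] using h
  rw [hz, map_zero, zero_add] at hr
  refine ⟨![a, b, c], ?_⟩
  ext i
  fin_cases i
  simp [Matrix.vecMul, dotProduct, Fin.sum_univ_succ, hr, add_assoc]

noncomputable def aug0 (ε : R →ₐ[ℂ] ℂ) : (cpx R).X 0 ⟶ triv ε := aug ε

lemma d_aug0 (ε : R →ₐ[ℂ] ℂ) (hε : ∀ i, ε (Good.gen i) = 0) : (cpx R).d 1 0 ≫ aug0 ε = 0 := by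
  rw [cpx_d]; exact dd_aug ε hε

noncomputable def piMap (ε : R →ₐ[ℂ] ℂ) (hε : ∀ i, ε (Good.gen i) = 0) :
    cpx R ⟶ (ChainComplex.single₀ (ModuleCat.{0} R)).obj (triv ε) :=
  (ChainComplex.toSingle₀Equiv _ _).symm ⟨aug0 ε, d_aug0 ε hε⟩

lemma piMap_f (ε : R →ₐ[ℂ] ℂ) (hε : ∀ i, ε (Good.gen i) = 0) : (piMap ε hε).f 0 = aug0 ε :=
  ChainComplex.toSingle₀Equiv_symm_apply_f_zero _ _

lemma aug0_exact (ε : R →ₐ[ℂ] ℂ) (hε : ∀ i, ε (Good.gen i) = 0) :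
    (ShortComplex.mk ((cpx R).d 1 0) (aug0 ε) (d_aug0 ε hε)).Exact ∧ Epi (aug0 ε) := by
  constructor
  · rw [ShortComplex.moduleCat_exact_iff]
    intro v hv
    obtain ⟨w, hw⟩ := aug_exact ε hε v hv
    refine ⟨w, ?_⟩
    change ((cpx R).d 1 0).hom w = v
    rw [cpx_d]
    exact hw
  · rw [ModuleCat.epi_iff_surjective]
    intro z
    exact ⟨(fun _ => algebraMap ℂ R z : Fin 1 → R), ε.commutes z⟩

noncomputable def resol (ε : R →ₐ[ℂ] ℂ) (hε : ∀ i, ε (Good.gen i) = 0) :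
    ProjectiveResolution (triv ε) where
  complex := cpx R
  projective n := inferInstanceAs (Projective (XX R n))
  π := piMap ε hε
  quasiIso := ⟨fun n => by
    cases n with
    | zero =>
      rw [ChainComplex.quasiIsoAt₀_iff, ShortComplex.quasiIso_iff_of_zeros']
      · refine (ShortComplex.exact_and_epi_g_iff_of_iso ?_).2 (aug0_exact ε hε)
        exact ShortComplex.isoMk (Iso.refl _) (Iso.refl _) (Iso.refl _)
          ((Category.id_comp _).trans (Category.comp_id _).symm)
          ((Category.id_comp _).trans ((piMap_f ε hε).symm.trans (Category.comp_id _).symm))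
      all_goals rfl
    | succ n =>
      rw [quasiIsoAt_iff_exactAt']
      · rw [HomologicalComplex.exactAt_iff' _ (n + 2) (n + 1) n (by simp) (by simp),
          ShortComplex.moduleCat_exact_iff]
        intro v hv
        obtain ⟨w, hw⟩ := Mt_exact n v (by
          change ((cpx R).d (n + 1) n).hom v = 0 at hv
          rw [cpx_d] at hv
          exact hv)
        refine ⟨w, ?_⟩
        change ((cpx R).d (n + 2) (n + 1)).hom w = v
        rw [cpx_d]
        exact hw
      · apply ChainComplex.exactAt_succ_single_obj⟩

end Betti
end res
section ext
open Limits

namespace Betti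

variable {R : Type} [Ring R] [Algebra ℂ R] [Good R]

lemma finrank_homology (S : ShortComplex (ModuleCat.{0} ℂ)) [Module.Finite ℂ S.X₂] :
    Module.finrank ℂ S.homology + Module.finrank ℂ (LinearMap.range S.f.hom) +
      Module.finrank ℂ (LinearMap.range S.g.hom) = Module.finrank ℂ S.X₂ := by
  rw [S.moduleCatHomologyIso.toLinearEquiv.finrank_eq]
  change Module.finrank ℂ (LinearMap.ker S.g.hom ⧸ LinearMap.range S.moduleCatToCycles) + _ + _ = _
  have h1 := Submodule.finrank_quotient_add_finrank (LinearMap.range S.moduleCatToCycles)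
  have h2 : Module.finrank ℂ (LinearMap.range S.moduleCatToCycles) =
      Module.finrank ℂ (LinearMap.range S.f.hom) := by
    have e : S.f.hom = (LinearMap.ker S.g.hom).subtype ∘ₗ S.moduleCatToCycles := rfl
    rw [e, LinearMap.range_comp]
    exact (Submodule.finrank_map_subtype_eq _ _).symm
  have h3 := LinearMap.finrank_range_add_finrank_ker S.g.hom
  omega

lemma sum_single {m : ℕ} (ε : R →ₐ[ℂ] ℂ) (i : Fin m) (v : Fin m → ℂ) :
    ∑ j, ε ((Pi.single i 1 : Fin m → R) j) * v j = v i := by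
  rw [Finset.sum_eq_single i]
  · simp
  · intro j _ hj
    simp [Pi.single_eq_of_ne hj]
  · simp

noncomputable def homEquiv (ε : R →ₐ[ℂ] ℂ) (n : ℕ) :
    (XX R n ⟶ triv ε) ≃ₗ[ℂ] (Fin (bt n) → ℂ) where
  toFun f i := (f.hom (Pi.single i 1 : Fin (bt n) → R) : ℂ)
  map_add' f g := rfl
  map_smul' c f := by
    ext i
    change ε (algebraMap ℂ R c) * _ = c * _
    rw [ε.commutes]
    rfl
  invFun v := ModuleCat.ofHom (Y := triv ε)
    { toFun := fun w : Fin (bt n) → R => (∑ i, ε (w i) * v i : ℂ)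
      map_add' := fun a b => by
        change (∑ i, ε (a i + b i) * v i : ℂ) = (∑ i, ε (a i) * v i : ℂ) + (∑ i, ε (b i) * v i : ℂ)
        simp [add_mul, Finset.sum_add_distrib]
      map_smul' := fun r a => by
        change (∑ i, ε (r * a i) * v i : ℂ) = ε r * (∑ i, ε (a i) * v i : ℂ)
        simp [Finset.mul_sum, mul_assoc] }
  left_inv f := by
    apply ModuleCat.hom_ext
    apply LinearMap.pi_ext'
    intro i
    apply LinearMap.ext_ring
    exact sum_single ε i (fun j => f.hom (Pi.single j 1 : Fin (bt n) → R))
  right_inv v := by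
    ext i
    exact sum_single ε i v

lemma homEquiv_symm_apply (ε : R →ₐ[ℂ] ℂ) (n : ℕ) (v : Fin (bt n) → ℂ) (w : Fin (bt n) → R) :
    ((homEquiv ε n).symm v).hom w = (∑ i, ε (w i) * v i : ℂ) := rfl

lemma homEquiv_apply (ε : R →ₐ[ℂ] ℂ) (n : ℕ) (f : XX R n ⟶ triv ε) (i : Fin (bt n)) :
    homEquiv ε n f i = f.hom (Pi.single i 1 : Fin (bt n) → R) := rfl

lemma homEquiv_d (ε : R →ₐ[ℂ] ℂ) (n : ℕ) (v : Fin (bt n) → ℂ) :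
    homEquiv ε (n + 1) (dd R n ≫ (homEquiv ε n).symm v) = Matrix.mulVec ((Mt R n).map ε) v := by
  ext i
  rw [homEquiv_apply]
  change (∑ j, ε ((Matrix.vecMul (Pi.single i 1) (Mt R n)) j) * v j : ℂ) = _
  simp [Matrix.mulVec, dotProduct]

/-- the cochain complex -/
noncomputable abbrev KK (ε : R →ₐ[ℂ] ℂ) : CochainComplex (ModuleCat.{0} ℂ) ℕ :=
  (cpx R).linearYonedaObj ℂ (triv ε)

noncomputable def KKequiv (ε : R →ₐ[ℂ] ℂ) (n : ℕ) : (KK ε).X n ≃ₗ[ℂ] (Fin (bt n) → ℂ) :=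
  homEquiv ε n

lemma KK_d (ε : R →ₐ[ℂ] ℂ) (n : ℕ) : (KKequiv ε (n + 1)).toLinearMap ∘ₗ
    ((KK ε).d n (n + 1)).hom ∘ₗ (KKequiv ε n).symm.toLinearMap =
      Matrix.mulVecLin ((Mt R n).map ε) := by
  apply LinearMap.ext
  intro v
  rw [Matrix.mulVecLin_apply, ← homEquiv_d, ← cpx_d]
  rfl

noncomputable def rk (ε : R →ₐ[ℂ] ℂ) (n : ℕ) : ℕ :=
  Module.finrank ℂ (LinearMap.range (Matrix.mulVecLin ((Mt R n).map ε)))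

lemma finrank_range_d (ε : R →ₐ[ℂ] ℂ) (n : ℕ) :
    Module.finrank ℂ (LinearMap.range ((KK ε).d n (n + 1)).hom) = rk ε n := by
  rw [rk, ← KK_d, LinearMap.range_comp, LinearMap.range_comp, LinearEquiv.range, Submodule.map_top]
  exact (LinearEquiv.finrank_map_eq (KKequiv ε (n + 1)) _).symm

lemma finrank_X (ε : R →ₐ[ℂ] ℂ) (n : ℕ) : Module.finrank ℂ ((KK ε).X n) = bt n := by
  rw [(KKequiv ε n).finrank_eq]; simp

instance (ε : R →ₐ[ℂ] ℂ) (n : ℕ) : Module.Finite ℂ ((KK ε).X n) :=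
  Module.Finite.equiv (KKequiv ε n).symm

lemma extDim_eq (ε : R →ₐ[ℂ] ℂ) (hε : ∀ i, ε (Good.gen i) = 0) (n : ℕ) :
    extDim R ε n = Module.finrank ℂ ((KK ε).homology n) :=
  ((resol ε hε).isoExt (R := ℂ) n (triv ε)).toLinearEquiv.finrank_eq

lemma homology_zero (ε : R →ₐ[ℂ] ℂ) :
    Module.finrank ℂ ((KK ε).homology 0) + rk ε 0 = bt 0 := by
  rw [((KK ε).homologyIsoSc' 0 0 1 (by simp) (by simp)).toLinearEquiv.finrank_eq]
  haveI : Module.Finite ℂ ((KK ε).sc' 0 0 1).X₂ := inferInstanceAs (Module.Finite ℂ ((KK ε).X 0))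
  have := finrank_homology ((KK ε).sc' 0 0 1)
  have e : ((KK ε).sc' 0 0 1).f = 0 := (KK ε).shape _ _ (by simp)
  have e1 : Module.finrank ℂ (LinearMap.range ((KK ε).sc' 0 0 1).f.hom) = 0 := by
    rw [e, ModuleCat.hom_zero, LinearMap.range_zero, finrank_bot]
  have e2 : Module.finrank ℂ (LinearMap.range ((KK ε).sc' 0 0 1).g.hom) = rk ε 0 :=
    finrank_range_d ε 0
  have e3 : Module.finrank ℂ ((KK ε).sc' 0 0 1).X₂ = bt 0 := finrank_X ε 0
  rw [e1, e2, e3] at this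
  exact this

lemma homology_succ (ε : R →ₐ[ℂ] ℂ) (n : ℕ) :
    Module.finrank ℂ ((KK ε).homology (n + 1)) + rk ε n + rk ε (n + 1) = bt (n + 1) := by
  rw [((KK ε).homologyIsoSc' n (n + 1) (n + 2) (by simp) (by simp)).toLinearEquiv.finrank_eq]
  haveI : Module.Finite ℂ ((KK ε).sc' n (n + 1) (n + 2)).X₂ :=
    inferInstanceAs (Module.Finite ℂ ((KK ε).X (n + 1)))
  have := finrank_homology ((KK ε).sc' n (n + 1) (n + 2))
  have e1 : Module.finrank ℂ (LinearMap.range ((KK ε).sc' n (n + 1) (n + 2)).f.hom) = rk ε n :=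
    finrank_range_d ε n
  have e2 : Module.finrank ℂ (LinearMap.range ((KK ε).sc' n (n + 1) (n + 2)).g.hom) = rk ε (n + 1) :=
    finrank_range_d ε (n + 1)
  have e3 : Module.finrank ℂ ((KK ε).sc' n (n + 1) (n + 2)).X₂ = bt (n + 1) := finrank_X ε (n + 1)
  rw [e1, e2, e3] at this
  exact this

lemma rk_0 (ε : R →ₐ[ℂ] ℂ) (hε : ∀ i, ε (Good.gen i) = 0) : rk ε 0 = 0 := by
  have : (Mt R 0).map ε = 0 := by
    change (!![gx; gy; gt] : Matrix (Fin 3) (Fin 1) R).map ε = 0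
    ext i j
    fin_cases i <;> fin_cases j <;> simp [hε]
  rw [rk, this, Matrix.mulVecLin_zero, LinearMap.range_zero, finrank_bot]

lemma rk_3 (ε : R →ₐ[ℂ] ℂ) (n : ℕ) : rk ε (n + 3) = 0 := by
  have : (Mt R (n + 3)).map ε = 0 := by
    ext i j
    exact map_zero ε
  rw [rk, this, Matrix.mulVecLin_zero, LinearMap.range_zero, finrank_bot]

lemma rk_1 (ε : R →ₐ[ℂ] ℂ) (hε : ∀ i, ε (Good.gen i) = 0) : rk ε 1 = 1 := by
  have h : (Mt R 1).map ε = (!![0, 0, 0; -1, 0, 0; 0, 0, 0] : Matrix (Fin 3) (Fin 3) ℂ) := by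
    change (!![gy, gx, 0; gt - 1, 0, -gx; 0, gt, -gy] : Matrix (Fin 3) (Fin 3) R).map ε = _
    ext i j
    fin_cases i <;> fin_cases j <;> simp [hε]
  rw [rk, h]
  have h2 : LinearMap.range (Matrix.mulVecLin
      (!![0, 0, 0; -1, 0, 0; 0, 0, 0] : Matrix (Fin 3) (Fin 3) ℂ)) =
      Submodule.span ℂ {(![0, 1, 0] : Fin 3 → ℂ)} := by
    ext v
    rw [Submodule.mem_span_singleton, LinearMap.mem_range]
    constructor
    · rintro ⟨w, rfl⟩
      refine ⟨- w 0, ?_⟩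
      ext i
      fin_cases i <;> simp [Matrix.mulVec, dotProduct, Fin.sum_univ_succ]
    · rintro ⟨a, rfl⟩
      refine ⟨![-a, 0, 0], ?_⟩
      ext i
      fin_cases i <;> simp [Matrix.mulVec, dotProduct, Fin.sum_univ_succ]
  refine (congrArg (fun S : Submodule ℂ (Fin 3 → ℂ) => Module.finrank ℂ S) h2).trans ?_
  refine finrank_span_singleton (fun h => ?_)
  simpa using congrFun h 1

lemma rk_2 (ε : R →ₐ[ℂ] ℂ) (hε : ∀ i, ε (Good.gen i) = 0) : rk ε 2 = 1 := by
  have h : (Mt R 2).map ε = (!![1, 0, 0] : Matrix (Fin 1) (Fin 3) ℂ) := by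
    change (!![1 - gt, gy, gx] : Matrix (Fin 1) (Fin 3) R).map ε = _
    ext i j
    fin_cases i <;> fin_cases j <;> simp [hε]
  rw [rk, h]
  have h2 : LinearMap.range (Matrix.mulVecLin (!![1, 0, 0] : Matrix (Fin 1) (Fin 3) ℂ)) = ⊤ := by
    rw [LinearMap.range_eq_top]
    intro v
    refine ⟨![v 0, 0, 0], ?_⟩
    ext i
    fin_cases i
    simp [Matrix.mulVec, dotProduct, Fin.sum_univ_succ]
  refine (congrArg (fun S : Submodule ℂ (Fin 1 → ℂ) => Module.finrank ℂ S) h2).trans ?_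
  simp

theorem main (ε : R →ₐ[ℂ] ℂ) (hε : ∀ i, ε (Good.gen i) = 0) :
    extDim R ε 0 = 1 ∧ extDim R ε 1 = 2 ∧ extDim R ε 2 = 1 ∧ ∀ n ≥ 3, extDim R ε n = 0 := by
  have r0 := rk_0 ε hε
  have r1 := rk_1 ε hε
  have r2 := rk_2 ε hε
  have b1 : bt 1 = 3 := rfl
  have b2 : bt 2 = 3 := rfl
  have b3 : bt 3 = 1 := rfl
  simp only [extDim_eq ε hε]
  refine ⟨?_, ?_, ?_, ?_⟩
  · have := homology_zero ε
    rw [r0] at this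
    exact this
  · have : Module.finrank ℂ ((KK ε).homology 1) + rk ε 0 + rk ε 1 = bt 1 := homology_succ ε 0
    rw [r0, r1, b1] at this
    omega
  · have := homology_succ ε 1
    simp only [Nat.reduceAdd] at this
    omega
  · intro n hn
    obtain ⟨k, rfl⟩ := Nat.exists_eq_add_of_le' hn
    have := homology_succ ε (k + 2)
    rcases k with _ | k
    · simp only [Nat.reduceAdd, zero_add] at this ⊢
      omega
    · have hb : bt (k + 1 + 2 + 1) = 0 := rfl
      rw [hb] at this
      exact (Nat.add_eq_zero_iff.1 (Nat.add_eq_zero_iff.1 this).1).1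

noncomputable instance : Good (RingQuot CRel) where
  gen i := RingQuot.mkAlgHom ℂ CRel (ι ℂ i)
  rel_tx := by
    have := RingQuot.mkAlgHom_rel ℂ CRel.r12
    simp only [map_sub, map_mul] at this
    exact sub_eq_iff_eq_add'.1 this
  rel_ty := by
    have := RingQuot.mkAlgHom_rel ℂ CRel.r13
    simp only [map_sub, map_mul, map_zero] at this
    exact sub_eq_zero.1 this
  rel_xy := by
    have := RingQuot.mkAlgHom_rel ℂ CRel.r23
    simp only [map_add, map_mul, map_zero] at this
    exact eq_neg_of_add_eq_zero_left this
  ind := by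
    intro P hs hg ha hm r
    obtain ⟨f, rfl⟩ := RingQuot.mkAlgHom_surjective ℂ CRel r
    induction f using FreeAlgebra.induction with
    | grade0 c => simpa using hs c
    | grade1 i => exact hg i
    | mul a b h1 h2 => rw [map_mul]; exact hm _ _ h1 h2
    | add a b h1 h2 => rw [map_add]; exact ha _ _ h1 h2
  exists_lift := by
    intro B _ _ f h1 h2 h3
    refine ⟨RingQuot.liftAlgHom ℂ ⟨FreeAlgebra.lift ℂ f, ?_⟩, ?_⟩
    · rintro _ _ (_ | _ | _)
      · simp [h1]
      · simp [h2]
      · simp [h3]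
    · intro i
      simp

end Betti
end ext

theorem betti_numbers (ε : RingQuot CRel →ₐ[ℂ] ℂ)
    (hε : ∀ i : Fin 3, ε (RingQuot.mkAlgHom ℂ CRel (ι ℂ i)) = 0) :
    extDim (RingQuot CRel) ε 0 = 1 ∧ extDim (RingQuot CRel) ε 1 = 2 ∧
    extDim (RingQuot CRel) ε 2 = 1 ∧ ∀ n ≥ 3, extDim (RingQuot CRel) ε n = 0 := by
  exact Betti.main ε hε
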